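/- For every positive integer k, if a tree T contains a (2k+1)-thread both of whose ends are adjacent to vertices of degree 3 (i.e., T contains a path u_1, v_1, v_2, …, v_{2k+1}, u_2 where d_T(u_1) = d_T(u_2) = 3 and d_T(v_i) = 2 for all i = 1, …, 2k+1), then χ'_irr(T) ≤ 2, i.e., T admits a locally irregular edge-coloring using at most 2 colors. -/

import Mathlib

/-- A graph is *locally irregular* if no two adjacent vertices have the same degree. -/
def LocallyIrregular {V : Type*} (G : SimpleGraph V) : Prop :=
  ∀ ⦃u v : V⦄, G.Adj u v → (G.neighborSet u).ncard ≠ (G.neighborSet v).ncard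

/-- `HasLIEC G k` : `G` admits a locally irregular edge-coloring using at most `k` colors,
i.e. an assignment of one of `k` colors to every edge such that the edges of each fixed
color induce a locally irregular graph. -/
def HasLIEC {V : Type*} (G : SimpleGraph V) (k : ℕ) : Prop :=
  ∃ c : Sym2 V → Fin k, ∀ i : Fin k,
    LocallyIrregular (SimpleGraph.fromEdgeSet {e | e ∈ G.edgeSet ∧ c e = i})

lemma choice_lemma {V : Type*} [DecidableEq V] (S : Finset V) (a : V → ℕ) :
    ∃ R ⊆ S, (∀ y ∈ R, a y ≠ R.card + 1) ∧ ∀ y ∈ S \ R, a y ≠ S.card - R.card := by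
  by_contra hcon
  push Not at hcon
  obtain ⟨m, hm⟩ : ∃ m, m = S.card := ⟨_, rfl⟩
  let F : ℕ → Finset V := fun t => S.filter (fun y => a y = t ∨ a y = m + 1 - t)
  let g : ℕ → ℕ := fun t => if 2 * t = m + 1 then 1 else t + 1
  have key : ∀ t ∈ Finset.range ((m + 1) / 2 + 1), g t ≤ (F t).card := by
    intro t ht
    rw [Finset.mem_range] at ht
    by_contra hlt
    push Not at hlt
    have hA : (S.filter (fun y => a y = t)).card ≤ (F t).card := by
      apply Finset.card_le_card
      intro y hy
      simp only [F, Finset.mem_filter] at hy ⊢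
      tauto
    have hB : (S.filter (fun y => a y = m + 1 - t)).card ≤ (F t).card := by
      apply Finset.card_le_card
      intro y hy
      simp only [F, Finset.mem_filter] at hy ⊢
      tauto
    have hAB : S.filter (fun y => a y = t) ⊆ S \ S.filter (fun y => a y = m + 1 - t) := by
      intro y hy
      simp only [Finset.mem_sdiff, Finset.mem_filter] at hy ⊢
      refine ⟨hy.1, fun h => ?_⟩
      have h1 : 2 * t = m + 1 := by omega
      simp only [g, h1, if_true] at hlt
      have : (F t).card = 0 := by omega
      rw [Finset.card_eq_zero] at this
      have h2 : y ∈ F t := by simp only [F, Finset.mem_filter]; tauto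
      rw [this] at h2
      simp at h2
    have hg : g t ≤ t + 1 := by simp only [g]; split_ifs <;> omega
    have hg2 : g t ≤ m - t + 1 := by simp only [g]; split_ifs <;> omega
    have hc := Finset.card_sdiff_of_subset (Finset.filter_subset (fun y => a y = m + 1 - t) S)
    obtain ⟨R, h1, h2, h3⟩ := Finset.exists_subsuperset_card_eq (n := m - t) hAB (by omega) (by omega)
    have hRS : R ⊆ S := h2.trans Finset.sdiff_subset
    have htm : t ≤ m := by
      by_contra hh
      have : m = 0 := by omega
      have : t = 1 := by omega
      omega
    obtain ⟨y, hy, hy2⟩ := hcon R hRS (by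
      intro y hy h
      have := h2 hy
      simp only [Finset.mem_sdiff, Finset.mem_filter] at this
      apply this.2
      exact ⟨this.1, by omega⟩)
    rw [Finset.mem_sdiff] at hy
    apply hy.2
    apply h1
    rw [Finset.mem_filter]
    exact ⟨hy.1, by omega⟩
  have hdis : ((Finset.range ((m + 1) / 2 + 1)).biUnion F).card
      = ∑ t ∈ Finset.range ((m + 1) / 2 + 1), (F t).card := by
    apply Finset.card_biUnion
    intro i hi j hj hij
    rw [Finset.mem_coe, Finset.mem_range] at hi hj
    rw [Function.onFun, Finset.disjoint_left]
    intro y h1 h2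
    simp only [F, Finset.mem_filter] at h1 h2
    omega
  have hle : ((Finset.range ((m + 1) / 2 + 1)).biUnion F).card ≤ m := by
    rw [hm]
    apply Finset.card_le_card
    intro y hy
    rw [Finset.mem_biUnion] at hy
    obtain ⟨t, _, h⟩ := hy
    exact (Finset.mem_filter.1 h).1
  have hsum := Finset.sum_le_sum key
  rw [← hdis] at hsum
  have hlow : m < ∑ t ∈ Finset.range ((m + 1) / 2 + 1), g t := by
    by_cases h4 : m < 4
    · clear * - h4
      simp only [g]
      interval_cases m <;> decide
    · have h1 : ∑ t ∈ Finset.range (m / 2 + 1), (t + 1) ≤ ∑ t ∈ Finset.range ((m + 1) / 2 + 1), g t := by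
        calc _ = ∑ t ∈ Finset.range (m / 2 + 1), g t := by
              apply Finset.sum_congr rfl
              intro t ht
              rw [Finset.mem_range] at ht
              simp only [g]
              rw [if_neg (by omega)]
          _ ≤ _ := by
              apply Finset.sum_le_sum_of_subset
              apply Finset.range_mono
              omega
      have h2 := Finset.sum_range_id_mul_two (m / 2 + 2)
      rw [Finset.sum_range_succ'] at h2
      simp only [add_zero] at h2
      have h3 : 2 ≤ m / 2 := by omega
      have h5 : m ≤ 2 * (m / 2) + 1 := by omega
      have h6 : m / 2 + 2 - 1 = m / 2 + 1 := by omega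
      rw [h6] at h2
      nlinarith
  omega

lemma choice_two {V : Type*} [DecidableEq V] (S : Finset V) (a : V → ℕ) (hS : S.card = 2) :
    ∃ R ⊆ S, (∀ y ∈ R, a y ≠ R.card + 1) ∧ (∀ y ∈ S \ R, a y ≠ S.card - R.card) ∧
      1 ≤ R.card := by
  obtain ⟨p, q, hpq, rfl⟩ := Finset.card_eq_two.1 hS
  have key : ∀ p q : V, p ≠ q → a p = 3 →
      ∃ R ⊆ ({p, q} : Finset V), (∀ y ∈ R, a y ≠ R.card + 1) ∧
       (∀ y ∈ ({p, q} : Finset V) \ R, a y ≠ 2 - R.card) ∧ 1 ≤ R.card := by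
    intro p q hpq h3
    by_cases hq : a q = 1
    · refine ⟨{q}, by simp, by simp [hq], ?_, by simp⟩
      intro y hy
      simp at hy
      rcases hy with ⟨rfl | rfl, h⟩
      · simp [h3]
      · exact absurd rfl h
    · refine ⟨{p}, by simp, by simp [h3], ?_, by simp⟩
      intro y hy
      simp at hy
      rcases hy with ⟨rfl | rfl, h⟩
      · exact absurd rfl h
      · simpa using hq
  rw [hS]
  by_cases hp : a p = 3
  · exact key p q hpq hp
  by_cases hq : a q = 3
  · have := key q p hpq.symm hq
    rwa [Finset.pair_comm] at this
  · exact ⟨{p, q}, subset_rfl, by simp [hS, hp, hq], by simp, by omega⟩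
lemma exists_par {V : Type*} (T : SimpleGraph V) (hT : T.IsTree) (r x : V) (hx : x ≠ r) :
    ∃ y, T.Adj x y ∧ T.dist r y + 1 = T.dist r x := by
  obtain ⟨p, hp, hl⟩ := hT.connected.exists_path_of_dist r x
  have hn : ¬ p.Nil := fun h => hx h.eq.symm
  refine ⟨p.penultimate, (p.adj_penultimate hn).symm, ?_⟩
  have h1 := T.dist_le p.dropLast
  have h2 := hT.dist_eq_dist_add_one_of_adj r (p.adj_penultimate hn)
  have h3 : p.dropLast.length + 1 = p.length := by
    simp [SimpleGraph.Walk.dropLast]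
    exact Nat.sub_add_cancel (SimpleGraph.Walk.not_nil_iff_lt_length.1 hn)
  omega

lemma unique_par {V : Type*} (T : SimpleGraph V) (hT : T.IsTree) (r x y z : V)
    (hy : T.Adj x y) (hz : T.Adj x z) (hdy : T.dist r y + 1 = T.dist r x)
    (hdz : T.dist r z + 1 = T.dist r x) : y = z := by
  obtain ⟨p, hp, hl⟩ := hT.connected.exists_path_of_dist r y
  obtain ⟨q, hq, hl2⟩ := hT.connected.exists_path_of_dist r z
  have h1 := SimpleGraph.Walk.isPath_of_length_eq_dist (p.concat hy.symm) (by simp; omega)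
  have h2 := SimpleGraph.Walk.isPath_of_length_eq_dist (q.concat hz.symm) (by simp; omega)
  have h3 := (hT.existsUnique_path r x).unique h1 h2
  have := congrArg SimpleGraph.Walk.penultimate h3
  simpa using this

lemma global_choice {V : Type*} [DecidableEq V] (D : V → Finset V) (d : V → ℕ) (Q : V → ℕ → Prop)
    (hd : ∀ x, ∀ y ∈ D x, d y = d x + 1)
    (hloc : ∀ (x : V) (a : V → ℕ), (∀ y ∈ D x, Q y (a y)) →
      ∃ R ⊆ D x, (∀ y ∈ R, a y ≠ R.card + 1) ∧ (∀ y ∈ D x \ R, a y ≠ (D x).card - R.card) ∧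
        Q x (R.card + 1)) (N : ℕ) (hN : ∀ x, d x < N) :
    ∃ R : V → Finset V, ∀ x, R x ⊆ D x ∧ (∀ y ∈ R x, (R y).card + 1 ≠ (R x).card + 1) ∧
      (∀ y ∈ D x \ R x, (R y).card + 1 ≠ (D x).card - (R x).card) ∧ Q x ((R x).card + 1) := by
  have main : ∀ n, ∃ R : V → Finset V, ∀ x, N ≤ d x + n → R x ⊆ D x ∧
      (∀ y ∈ R x, (R y).card + 1 ≠ (R x).card + 1) ∧
      (∀ y ∈ D x \ R x, (R y).card + 1 ≠ (D x).card - (R x).card) ∧ Q x ((R x).card + 1) := by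
    intro n
    induction n with
    | zero => exact ⟨fun _ => ∅, fun x hx => absurd (hN x) (by omega)⟩
    | succ n ih =>
      obtain ⟨R, hR⟩ := ih
      have : ∀ x, ∃ S : Finset V, d x + (n + 1) = N → S ⊆ D x ∧
          (∀ y ∈ S, (R y).card + 1 ≠ S.card + 1) ∧
          (∀ y ∈ D x \ S, (R y).card + 1 ≠ (D x).card - S.card) ∧ Q x (S.card + 1) := by
        intro x
        by_cases hx : d x + (n + 1) = N
        · obtain ⟨S, h1, h2, h3, h4⟩ := hloc x (fun y => (R y).card + 1) (fun y hy =>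
            (hR y (by have := hd x y hy; omega)).2.2.2)
          exact ⟨S, fun _ => ⟨h1, h2, h3, h4⟩⟩
        · exact ⟨∅, fun h => absurd h hx⟩
      choose S hS using this
      refine ⟨fun x => if d x + (n + 1) = N then S x else R x, fun x hx => ?_⟩
      have hch : ∀ y ∈ D x, (if d y + (n + 1) = N then S y else R y) = R y := by
        intro y hy
        have := hd x y hy
        rw [if_neg (by omega)]
      by_cases hxn : d x + (n + 1) = N
      · obtain ⟨h1, h2, h3, h4⟩ := hS x hxn
        simp only [if_pos hxn]
        refine ⟨h1, fun y hy => ?_, fun y hy => ?_, h4⟩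
        · rw [hch y (h1 hy)]; exact h2 y hy
        · rw [hch y (Finset.mem_sdiff.1 hy).1]; exact h3 y hy
      · obtain ⟨h1, h2, h3, h4⟩ := hR x (by omega)
        simp only [if_neg hxn]
        refine ⟨h1, fun y hy => ?_, fun y hy => ?_, h4⟩
        · rw [hch y (h1 hy)]; exact h2 y hy
        · rw [hch y (Finset.mem_sdiff.1 hy).1]; exact h3 y hy
  obtain ⟨R, hR⟩ := main N
  exact ⟨R, fun x => hR x (by omega)⟩

lemma exists_C {V : Type*} (d : V → ℕ) (p : V → V) (r : V) (P : V → Prop)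
    (hd : ∀ x, x ≠ r → d x = d (p x) + 1) :
    ∃ C : V → Fin 2, ∀ y, y ≠ r → (C y = C (p y) ↔ ¬ P y) := by
  classical
  let f : V → ZMod 2 := fun y => if P y then 1 else 0
  let C : V → ZMod 2 := fun x => ∑ j ∈ Finset.range (d x), f (p^[j] x)
  refine ⟨C, fun y hy => ?_⟩
  have h : C y = C (p y) + f y := by
    simp only [C]
    rw [hd y hy, Finset.sum_range_succ']
    simp
  have h2 : ∀ u : ZMod 2, u + 1 ≠ u := by decide
  by_cases hP : P y
  · have hf : f y = 1 := if_pos hP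
    rw [hf] at h
    exact ⟨fun h3 => absurd (h.symm.trans h3) (h2 _), fun h3 => absurd hP h3⟩
  · have hf : f y = 0 := if_neg hP
    rw [hf, add_zero] at h
    exact ⟨fun _ => hP, fun _ => h⟩

lemma final_color {V : Type*} [DecidableEq V] (T : SimpleGraph V) (d : V → ℕ) (p : V → V)
    (D R : V → Finset V) (r r1 : V)
    (hD : ∀ x y, y ∈ D x ↔ T.Adj x y ∧ y ≠ p x) (hp : ∀ x, T.Adj x (p x))
    (hchild : ∀ x, ∀ y ∈ D x, p y = x)
    (hd : ∀ x, x ≠ r → d x = d (p x) + 1) (hr : d r = 0) (hpr : p r = r1) (hpr1 : p r1 = r)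
    (hR : ∀ x, R x ⊆ D x) (hR1 : ∀ x, ∀ y ∈ R x, (R y).card + 1 ≠ (R x).card + 1)
    (hR2 : ∀ x, ∀ y ∈ D x \ R x, (R y).card + 1 ≠ (D x).card - (R x).card)
    (hroot : (R r).card ≠ (R r1).card) : HasLIEC T 2 := by
  obtain ⟨C, hC⟩ := exists_C d p r (fun y => y ∈ D (p y) ∧ y ∉ R (p y)) hd
  have hrr1 : r1 ≠ r := by have := (hp r).ne; rw [hpr] at this; exact this.symm
  have hCr : C r1 = C r := by
    have := (hC r1 hrr1).2 (fun h => by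
      have := ((hD _ _).1 h.1).2
      rw [hpr1, hpr] at this
      exact this rfl)
    rwa [hpr1] at this
  have hnr : ∀ x, ∀ y ∈ D x, y ≠ r := by
    rintro x y hy rfl
    have h1 := hchild x y hy
    rw [hpr] at h1
    subst h1
    exact ((hD _ _).1 hy).2 hpr1.symm
  have hCR : ∀ x, ∀ y ∈ R x, C y = C x := by
    intro x y hy
    have h := hchild x y (hR x hy)
    have := (hC y (hnr x y (hR x hy))).2
    rw [h] at this
    exact this (fun h => h.2 hy)
  have hCN : ∀ x, ∀ y ∈ D x \ R x, C y ≠ C x := by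
    intro x y hy
    rw [Finset.mem_sdiff] at hy
    have h := hchild x y hy.1
    have := (hC y (hnr x y hy.1)).1
    rw [h] at this
    exact fun h => this h hy
  let c : Sym2 V → Fin 2 := Sym2.lift ⟨fun x y => if d x < d y then C y else
    if d y < d x then C x else 0, fun x y => by
      beta_reduce
      split_ifs <;> first | rfl | omega⟩
  have hc : ∀ x, c s(x, p x) = C x := by
    intro x
    simp only [c, Sym2.lift_mk]
    by_cases hx : x = r
    · subst hx
      have := hd r1 hrr1
      rw [hpr1] at this
      rw [hpr, if_pos (by omega), hCr]
    · have := hd x hx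
      rw [if_neg (by omega), if_pos (by omega)]
  have hcD : ∀ x, ∀ y ∈ D x, c s(x, y) = C y := by
    intro x y hy
    rw [← hc y, hchild x y hy, Sym2.eq_swap]
  have hadj : ∀ i x y, (SimpleGraph.fromEdgeSet {e | e ∈ T.edgeSet ∧ c e = i}).Adj x y ↔
      T.Adj x y ∧ c s(x, y) = i := by
    intro i x y
    rw [SimpleGraph.fromEdgeSet_adj]
    simp only [Set.mem_ofPred_eq, SimpleGraph.mem_edgeSet]
    exact ⟨fun h => h.1, fun h => ⟨h, h.1.ne⟩⟩
  have hsame : ∀ x, ((SimpleGraph.fromEdgeSet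
      {e | e ∈ T.edgeSet ∧ c e = C x}).neighborSet x).ncard = (R x).card + 1 := by
    intro x
    have hpx : p x ∉ R x := fun h => ((hD _ _).1 (hR x h)).2 rfl
    rw [← Finset.card_insert_of_notMem hpx, ← Set.ncard_coe_finset]
    congr 1
    ext y
    rw [SimpleGraph.mem_neighborSet, hadj, Finset.mem_coe, Finset.mem_insert]
    constructor
    · rintro ⟨h1, h2⟩
      by_cases hy : y = p x
      · exact Or.inl hy
      · right
        have hyD := (hD x y).2 ⟨h1, hy⟩
        by_contra hyR
        rw [hcD x y hyD] at h2
        exact hCN x y (Finset.mem_sdiff.2 ⟨hyD, hyR⟩) h2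
    · rintro (rfl | h)
      · exact ⟨hp x, hc x⟩
      · exact ⟨((hD _ _).1 (hR x h)).1, by rw [hcD x y (hR x h), hCR x y h]⟩
  have hdiff : ∀ x i, i ≠ C x → ((SimpleGraph.fromEdgeSet
      {e | e ∈ T.edgeSet ∧ c e = i}).neighborSet x).ncard = (D x).card - (R x).card := by
    intro x i hi
    rw [← Finset.card_sdiff_of_subset (hR x), ← Set.ncard_coe_finset]
    congr 1
    ext y
    rw [SimpleGraph.mem_neighborSet, hadj, Finset.mem_coe, Finset.mem_sdiff]
    constructor
    · rintro ⟨h1, h2⟩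
      by_cases hy : y = p x
      · subst hy
        rw [hc] at h2
        exact absurd h2.symm hi
      · have hyD := (hD x y).2 ⟨h1, hy⟩
        refine ⟨hyD, fun hyR => hi ?_⟩
        rw [← h2, hcD x y hyD, hCR x y hyR]
    · intro h
      refine ⟨((hD _ _).1 h.1).1, ?_⟩
      rw [hcD x y h.1]
      have := hCN x y (Finset.mem_sdiff.2 h)
      omega
  have hmain : ∀ i x y, y ∈ D x → c s(x, y) = i →
      ((SimpleGraph.fromEdgeSet {e | e ∈ T.edgeSet ∧ c e = i}).neighborSet y).ncard ≠
      ((SimpleGraph.fromEdgeSet {e | e ∈ T.edgeSet ∧ c e = i}).neighborSet x).ncard := by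
    rintro i x y hy rfl
    rw [hcD x y hy, hsame]
    by_cases hyR : y ∈ R x
    · rw [hCR x y hyR, hsame]
      exact hR1 x y hyR
    · have h := Finset.mem_sdiff.2 ⟨hy, hyR⟩
      rw [hdiff x _ (hCN x y h)]
      exact hR2 x y h
  refine ⟨c, fun i u v huv => ?_⟩
  rw [hadj] at huv
  by_cases h1 : v ∈ D u
  · exact (hmain i u v h1 huv.2).symm
  by_cases h2 : u ∈ D v
  · exact hmain i v u h2 (by rw [Sym2.eq_swap]; exact huv.2)
  have e1 : v = p u := by
    by_contra h; exact h1 ((hD _ _).2 ⟨huv.1, h⟩)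
  have e2 : u = p v := by
    by_contra h; exact h2 ((hD _ _).2 ⟨huv.1.symm, h⟩)
  have hor : (u = r ∧ v = r1) ∨ (u = r1 ∧ v = r) := by
    by_cases hu : u = r
    · left; exact ⟨hu, by rw [e1, hu, hpr]⟩
    by_cases hv : v = r
    · right; exact ⟨by rw [e2, hv, hpr], hv⟩
    have := hd u hu
    have h3 := hd v hv
    rw [← e1] at this
    rw [← e2] at h3
    omega
  rcases hor with ⟨rfl, rfl⟩ | ⟨rfl, rfl⟩
  · have : c s(u, v) = C u := by rw [← hpr]; exact hc u
    rw [this] at huv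
    rw [← huv.2, hsame, ← hCr, hsame]
    omega
  · have : c s(u, v) = C u := by rw [← hpr1]; exact hc u
    rw [this] at huv
    rw [← huv.2, hsame, hCr, hsame]
    omega

lemma tree_main {V : Type*} [Fintype V] (T : SimpleGraph V)
    (hT : T.IsTree) (k : ℕ) (w : ℕ → V)
    (hinj : ∀ i j, i < 2 * k + 3 → j < 2 * k + 3 → w i = w j → i = j)
    (hadj : ∀ i, i < 2 * k + 2 → T.Adj (w i) (w (i + 1)))
    (hfirst : (T.neighborSet (w 0)).ncard = 3)
    (hlast : (T.neighborSet (w (2 * k + 2))).ncard = 3)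
    (hmid : ∀ i, 0 < i → i < 2 * k + 2 → (T.neighborSet (w i)).ncard = 2) :
    HasLIEC T 2 := by
  classical
  have hex : ∀ x, ∃ y, T.Adj x y ∧ (x ≠ w 0 → T.dist (w 0) y + 1 = T.dist (w 0) x) ∧
      (x = w 0 → y = w 1) := by
    intro x
    by_cases hx : x = w 0
    · exact ⟨w 1, hx ▸ hadj 0 (by omega), fun h => absurd hx h, fun _ => rfl⟩
    · obtain ⟨y, h1, h2⟩ := exists_par T hT (w 0) x hx
      exact ⟨y, h1, fun _ => h2, fun h => absurd h hx⟩
  choose p hp hpd hp0 using hex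
  let D : V → Finset V := fun x => (T.neighborFinset x).erase (p x)
  have hD : ∀ x y, y ∈ D x ↔ T.Adj x y ∧ y ≠ p x := by
    intro x y
    simp only [D, Finset.mem_erase, SimpleGraph.mem_neighborFinset]
    tauto
  have hDcard : ∀ x, (D x).card = (T.neighborSet x).ncard - 1 := by
    intro x
    simp only [D]
    rw [Finset.card_erase_of_mem (by simpa using hp x), ← Set.ncard_coe_finset,
      SimpleGraph.coe_neighborFinset]
  have hchild : ∀ x, ∀ y ∈ D x, T.dist (w 0) y = T.dist (w 0) x + 1 := by
    intro x y hy
    rw [hD] at hy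
    by_cases hx : x = w 0
    · subst hx
      simpa using hy.1
    · rcases hT.dist_eq_dist_add_one_of_adj (w 0) hy.1 with h | h
      · exact absurd (unique_par T hT (w 0) x y (p x) hy.1 (hp x) h.symm (hpd x hx)) hy.2
      · exact h
  have hparent : ∀ x y, T.Adj x y → T.dist (w 0) y = T.dist (w 0) x + 1 → p y = x := by
    intro x y h1 h2
    have hy : y ≠ w 0 := by
      rintro rfl
      simp at h2
    exact unique_par T hT (w 0) y (p y) x (hp y) h1.symm (hpd y hy) h2.symm
  have hw : ∀ i, i < 2 * k + 2 → T.dist (w 0) (w (i + 1)) = i + 1 ∧ p (w (i + 1)) = w i := by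
    intro i
    induction i with
    | zero =>
      intro h
      have h1 : T.dist (w 0) (w (0 + 1)) = 0 + 1 := by
        simpa using hadj 0 h
      exact ⟨h1, hparent _ _ (hadj 0 h) (by rw [h1]; simp)⟩
    | succ i ih =>
      intro h
      obtain ⟨h1, h2⟩ := ih (by omega)
      have h3 := hchild (w (i + 1)) (w (i + 1 + 1)) ((hD _ _).2 ⟨hadj (i + 1) h, by
        rw [h2]
        intro h4
        have := hinj _ _ (by omega) (by omega) h4
        omega⟩)
      exact ⟨by omega, hparent _ _ (hadj _ h) h3⟩
  let Q : V → ℕ → Prop := fun x a => ∀ i, i < 2 * k + 3 → x = w i →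
    if i % 2 = 1 then a = 1 else 2 ≤ a
  obtain ⟨N, hN⟩ : ∃ N, ∀ x, T.dist (w 0) x < N :=
    ⟨Finset.univ.sup (fun x => T.dist (w 0) x) + 1, fun x => Nat.lt_succ_of_le
      (Finset.le_sup (f := fun x => T.dist (w 0) x) (Finset.mem_univ x))⟩
  have hloc : ∀ (x : V) (a : V → ℕ), (∀ y ∈ D x, Q y (a y)) →
      ∃ R ⊆ D x, (∀ y ∈ R, a y ≠ R.card + 1) ∧ (∀ y ∈ D x \ R, a y ≠ (D x).card - R.card) ∧
        Q x (R.card + 1) := by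
    intro x a ha
    by_cases hx : ∃ i, i < 2 * k + 3 ∧ x = w i
    · obtain ⟨i, hi, rfl⟩ := hx
      have hQ : ∀ n, (if i % 2 = 1 then n = 1 else 2 ≤ n) → Q (w i) n := by
        intro n hn j hj hij
        have := hinj _ _ hi hj hij
        subst this
        exact hn
      by_cases he : i = 0 ∨ i = 2 * k + 2
      · have hc : (D (w i)).card = 2 := by
          rw [hDcard]
          rcases he with rfl | rfl
          · rw [hfirst]
          · rw [hlast]
        obtain ⟨R, h1, h2, h3, h4⟩ := choice_two (D (w i)) a hc
        exact ⟨R, h1, h2, h3, hQ _ (by rw [if_neg (by omega)]; omega)⟩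
      · have hc : (D (w i)).card = 1 := by
          rw [hDcard, hmid i (by omega) (by omega)]
        have hmem : w (i + 1) ∈ D (w i) := by
          rw [hD]
          refine ⟨hadj i (by omega), ?_⟩
          have h1 := (hw (i - 1) (by omega)).2
          rw [Nat.sub_add_cancel (by omega)] at h1
          rw [h1]
          intro h4
          have := hinj _ _ (by omega) (by omega) h4
          omega
        have hDe : D (w i) = {w (i + 1)} := by
          obtain ⟨z, hz⟩ := Finset.card_eq_one.1 hc
          rw [hz] at hmem ⊢
          rw [Finset.mem_singleton.1 hmem]
        have hq := ha _ hmem (i + 1) (by omega) rfl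
        by_cases hpar : i % 2 = 1
        · rw [if_neg (by omega)] at hq
          refine ⟨∅, by simp, by simp, ?_, hQ _ (by rw [if_pos hpar]; simp)⟩
          rw [hDe]
          simp
          omega
        · rw [if_pos (by omega)] at hq
          refine ⟨{w (i + 1)}, by rw [hDe], by simp [hq], by simp [hDe],
            hQ _ (by rw [if_neg hpar]; simp)⟩
    · obtain ⟨R, h1, h2, h3⟩ := choice_lemma (D x) a
      exact ⟨R, h1, h2, h3, fun i hi h => absurd ⟨i, hi, h⟩ hx⟩
  obtain ⟨R, hR⟩ := global_choice D (fun x => T.dist (w 0) x) Q hchild hloc N hN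
  refine final_color T (fun x => T.dist (w 0) x) p D R (w 0) (w 1) hD hp
    (fun x y hy => hparent x y ((hD _ _).1 hy).1 (hchild x y hy))
    (fun x hx => (hpd x hx).symm) (by simp) (hp0 _ rfl) (hw 0 (by omega)).2
    (fun x => (hR x).1) (fun x => (hR x).2.1) (fun x => (hR x).2.2.1) ?_
  have h0 := (hR (w 0)).2.2.2 0 (by omega) rfl
  have h1 := (hR (w 1)).2.2.2 1 (by omega) rfl
  norm_num at h0 h1
  intro h
  rw [h, h1] at h0
  simp at h0

/-- If a tree `T` contains a `(2k+1)`-thread both of whose ends are adjacent to vertices of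
degree 3, i.e. a path `w 0 = u_1, w 1 = v_1, …, w (2k+1) = v_{2k+1}, w (2k+2) = u_2` with
`d(u_1) = d(u_2) = 3` and all internal vertices of degree 2, then `T` admits a locally
irregular edge-coloring with at most 2 colors. -/
theorem tree_odd_thread_LIEC {V : Type*} [Fintype V] (T : SimpleGraph V)
    (hT : T.IsTree) (k : ℕ) (hk : 1 ≤ k) (w : Fin (2 * k + 3) → V)
    (hinj : Function.Injective w)
    (hadj : ∀ i : Fin (2 * k + 2), T.Adj (w i.castSucc) (w i.succ))
    (hfirst : (T.neighborSet (w 0)).ncard = 3)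
    (hlast : (T.neighborSet (w (Fin.last (2 * k + 2)))).ncard = 3)
    (hmid : ∀ i : Fin (2 * k + 3), i ≠ 0 → i ≠ Fin.last (2 * k + 2) →
      (T.neighborSet (w i)).ncard = 2) :
    HasLIEC T 2 := by
  refine tree_main T hT k (fun n => if h : n < 2 * k + 3 then w ⟨n, h⟩ else w 0) ?_ ?_ ?_ ?_ ?_
  · intro i j hi hj h
    simp only [dif_pos hi, dif_pos hj] at h
    simpa using hinj h
  · intro i hi
    simp only [dif_pos (show i < 2 * k + 3 by omega), dif_pos (show i + 1 < 2 * k + 3 by omega)]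
    exact hadj ⟨i, hi⟩
  · simpa using hfirst
  · simp only [dif_pos (show 2 * k + 2 < 2 * k + 3 by omega)]
    exact hlast
  · intro i h0 hi
    simp only [dif_pos (show i < 2 * k + 3 by omega)]
    apply hmid
    · intro h
      have := congrArg Fin.val h
      simp at this
      omega
    · intro h
      have := congrArg Fin.val h
      simp at this
      omega
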